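/- Let f : [ω₂]² → [ω₂]^{≤ω} satisfy f{α,β} ⊆ α ∩ β for all pairs, let p = (a,h,i) and p' = (a',h',i') be good twins in P_f with amalgamation r = p + p' = (b,g,j), and let δ_η = min{δ ∈ a ∩ a' : η ∈ h(δ) ∪ h'(δ)} whenever this minimum exists. Then for every ξ ∈ a ∩ a': g(ξ) = h(ξ) ∪ {η ∈ a' \ a : δ_η ∈ h(ξ)} = h'(ξ) ∪ {η ∈ a \ a' : δ_η ∈ h'(ξ)}. -/

import Mathlib

attribute [local instance] Classical.propDecidable

noncomputable section

/-- The second uncountable cardinal ω₂, as an ordinal. -/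
def omega2 : Ordinal := (Cardinal.aleph 2).ord

/-- The operation `x * y` on nonempty finite sets of ordinals with `max x ≠ max y`:
`x \ y` if `max x ∈ y`, `y \ x` if `max y ∈ x`, and `x ∩ y` otherwise. -/
def ostar (x y : Finset Ordinal) : Finset Ordinal :=
  if ∃ m ∈ y, x.max = (m : WithBot Ordinal) then x \ y
  else if ∃ m ∈ x, y.max = (m : WithBot Ordinal) then y \ x
  else x ∩ y

/-- The conditions of the poset `P_f`: triples `(a, h, i)` where `a` is a finite
subset of ω₂, `h : a → 𝒫(a)` with `max (h ξ) = ξ`, `i : [a]² → 𝒫(a)` with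
`i {ξ,η} ⊆ f {ξ,η}`, and `h ξ * h η ⊆ ⋃ {h ν : ν ∈ i {ξ,η}}`. -/
structure PfCond (f : Ordinal → Ordinal → Set Ordinal) where
  a : Finset Ordinal
  h : Ordinal → Finset Ordinal
  i : Ordinal → Ordinal → Finset Ordinal
  a_lt : ∀ ξ ∈ a, ξ < omega2
  h_sub : ∀ ξ ∈ a, h ξ ⊆ a
  h_mem : ∀ ξ ∈ a, ξ ∈ h ξ
  h_le : ∀ ξ ∈ a, ∀ η ∈ h ξ, η ≤ ξ
  i_symm : ∀ ξ η, i ξ η = i η ξ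
  i_sub_f : ∀ ξ ∈ a, ∀ η ∈ a, ξ ≠ η → ∀ ν ∈ i ξ η, ν ∈ f ξ η
  i_sub_a : ∀ ξ ∈ a, ∀ η ∈ a, ξ ≠ η → i ξ η ⊆ a
  star_cond : ∀ ξ ∈ a, ∀ η ∈ a, ξ ≠ η → ostar (h ξ) (h η) ⊆ (i ξ η).biUnion h

/-- The order on `P_f`: `p ≤ q` iff `a^p ⊇ a^q`, `h^p(ξ) ∩ a^q = h^q(ξ)` for
`ξ ∈ a^q`, and `i^p` extends `i^q`. -/
def PfLe {f : Ordinal → Ordinal → Set Ordinal} (p q : PfCond f) : Prop :=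
  q.a ⊆ p.a ∧ (∀ ξ ∈ q.a, p.h ξ ∩ q.a = q.h ξ) ∧
    ∀ ξ ∈ q.a, ∀ η ∈ q.a, ξ ≠ η → p.i ξ η = q.i ξ η

/-- Two finite subsets `x` and `y` of ω₂ are good for `f`. -/
def GoodFor (f : Ordinal → Ordinal → Set Ordinal) (x y : Finset Ordinal) : Prop :=
  ∀ α ∈ x ∩ y, ∀ β ∈ x \ y, ∀ γ ∈ y \ x,
    ((α < β ∧ α < γ) → α ∈ f β γ) ∧
    (α < β → f α γ ⊆ f β γ) ∧
    (α < γ → f α β ⊆ f γ β)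

/-- `p` and `p'` are good twins: the natural order preserving bijection between
`a^p` and `a^{p'}` is an isomorphism of the conditions fixing `a^p ∩ a^{p'}`,
`i` and `i'` agree on pairs from `a^p ∩ a^{p'}`, and `a^p`, `a^{p'}` are good
for `f`. -/
def GoodTwins {f : Ordinal → Ordinal → Set Ordinal} (p p' : PfCond f) : Prop :=
  (∃ e : Ordinal → Ordinal,
    Set.BijOn e ↑p.a ↑p'.a ∧
    (∀ ξ ∈ p.a, ∀ η ∈ p.a, ξ < η → e ξ < e η) ∧
    (∀ ξ ∈ p.a ∩ p'.a, e ξ = ξ) ∧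
    (∀ ξ ∈ p.a, p'.h (e ξ) = (p.h ξ).image e) ∧
    (∀ ξ ∈ p.a, ∀ η ∈ p.a, ξ ≠ η → p'.i (e ξ) (e η) = (p.i ξ η).image e)) ∧
  (∀ ξ ∈ p.a ∩ p'.a, ∀ η ∈ p.a ∩ p'.a, ξ ≠ η → p.i ξ η = p'.i ξ η) ∧
  GoodFor f p.a p'.a

/-- `δ` is the ordinal `δ_η = min {δ ∈ a^p ∩ a^{p'} : η ∈ h^p(δ) ∪ h^{p'}(δ)}`. -/
def DeltaIs {f : Ordinal → Ordinal → Set Ordinal} (p p' : PfCond f)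
    (η δ : Ordinal) : Prop :=
  δ ∈ p.a ∩ p'.a ∧ η ∈ p.h δ ∪ p'.h δ ∧
    ∀ δ' ∈ p.a ∩ p'.a, η ∈ p.h δ' ∪ p'.h δ' → δ ≤ δ'

namespace PfCond

variable {f : Ordinal → Ordinal → Set Ordinal}

theorem max_h (q : PfCond f) {ξ : Ordinal} (hξ : ξ ∈ q.a) :
    (q.h ξ).max = (ξ : WithBot Ordinal) :=
  le_antisymm (Finset.max_le fun η hη => WithBot.coe_le_coe.2 (q.h_le ξ hξ η hη))
    (Finset.le_max (q.h_mem ξ hξ))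

/-- If `η ∈ h δ` and exactly one of `η ∈ h ξ`, `δ ∈ h ξ` holds, where `δ < ξ`, then
`η ∈ h δ * h ξ`, so `η` is covered by some `h ν` with `ν ∈ i {δ,ξ}`. -/
theorem exists_mem_i_of_not_iff (q : PfCond f) {δ ξ η : Ordinal} (hδ : δ ∈ q.a)
    (hξ : ξ ∈ q.a) (hlt : δ < ξ) (hη : η ∈ q.h δ) (hne : ¬(η ∈ q.h ξ ↔ δ ∈ q.h ξ)) :
    ∃ ν ∈ q.i δ ξ, η ∈ q.h ν := by
  have hstar : η ∈ ostar (q.h δ) (q.h ξ) := by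
    have hξδ : ξ ∉ q.h δ := fun h => (q.h_le δ hδ ξ h).not_gt hlt
    simp only [ostar, q.max_h hδ, q.max_h hξ, WithBot.coe_inj, exists_eq_right', hξδ, if_false]
    split_ifs with h
    · exact Finset.mem_sdiff.2 ⟨hη, by tauto⟩
    · exact Finset.mem_inter.2 ⟨hη, by tauto⟩
  simpa using q.star_cond δ hδ ξ hξ hlt.ne hstar

end PfCond

section Twins

variable {f : Ordinal → Ordinal → Set Ordinal} {p p' : PfCond f}

theorem DeltaIs.symm {η δ : Ordinal} (h : DeltaIs p p' η δ) : DeltaIs p' p η δ := by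
  simpa only [DeltaIs, Finset.inter_comm p'.a, Finset.union_comm (p'.h _)] using h

theorem deltaIs_comm {η δ : Ordinal} : DeltaIs p p' η δ ↔ DeltaIs p' p η δ :=
  ⟨DeltaIs.symm, DeltaIs.symm⟩

theorem exists_deltaIs {η ξ : Ordinal} (hξ : ξ ∈ p.a ∩ p'.a) (hη : η ∈ p.h ξ ∪ p'.h ξ) :
    ∃ δ, DeltaIs p p' η δ := by
  obtain ⟨δ, hδ, hmin⟩ := WellFounded.has_min (wellFounded_lt (α := Ordinal))
    {δ | δ ∈ p.a ∩ p'.a ∧ η ∈ p.h δ ∪ p'.h δ} ⟨ξ, hξ, hη⟩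
  exact ⟨δ, hδ.1, hδ.2, fun δ' h₁ h₂ => not_lt.1 (hmin δ' ⟨h₁, h₂⟩)⟩

/-- The functions `h` of good twins agree on the common part of the supports. -/
theorem GoodTwins.mem_h_iff (htw : GoodTwins p p') {ξ η : Ordinal}
    (hξ : ξ ∈ p.a ∩ p'.a) (hη : η ∈ p.a ∩ p'.a) : η ∈ p.h ξ ↔ η ∈ p'.h ξ := by
  obtain ⟨⟨e, hbij, -, hfix, hh, -⟩, -⟩ := htw
  have hξa := (Finset.mem_inter.1 hξ).1
  have himage := hh ξ hξa
  rw [hfix ξ hξ] at himage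
  rw [himage, Finset.mem_image]
  refine ⟨fun h => ⟨η, h, hfix η hη⟩, ?_⟩
  rintro ⟨x, hx, hxη⟩
  rwa [← hbij.injOn (p.h_sub ξ hξa hx) (Finset.mem_inter.1 hη).1 (hxη.trans (hfix η hη).symm)]

/-- For `ξ` in the common part and `η` outside the support of `p`, membership of `η` in
`h' ξ` is determined by membership of `δ_η` in `h' ξ`. -/
theorem DeltaIs.mem_h_iff (hlt : ∀ α β γ, γ ∈ f α β → γ < α ∧ γ < β)
    (hi : ∀ ξ ∈ p.a ∩ p'.a, ∀ η ∈ p.a ∩ p'.a, ξ ≠ η → p.i ξ η = p'.i ξ η)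
    {ξ η δ : Ordinal} (hξ : ξ ∈ p.a ∩ p'.a) (hη : η ∉ p.a) (hδ : DeltaIs p p' η δ) :
    η ∈ p'.h ξ ↔ δ ∈ p'.h ξ := by
  obtain ⟨hδD, hηδ, hmin⟩ := hδ
  obtain ⟨hξa, hξa'⟩ := Finset.mem_inter.1 hξ
  obtain ⟨hδa, hδa'⟩ := Finset.mem_inter.1 hδD
  have hηδ' : η ∈ p'.h δ :=
    (Finset.mem_union.1 hηδ).resolve_left fun h => hη (p.h_sub δ hδa h)
  by_contra hne
  have hle : δ ≤ ξ := by
    by_cases h : η ∈ p'.h ξ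
    · exact hmin ξ hξ (Finset.mem_union_right _ h)
    · exact p'.h_le ξ hξa' δ (by tauto)
  have hδξ : δ < ξ := by
    refine lt_of_le_of_ne hle ?_
    rintro rfl
    exact hne (iff_of_true hηδ' (p'.h_mem δ hδa'))
  obtain ⟨ν, hν, hην⟩ := p'.exists_mem_i_of_not_iff hδa' hξa' hδξ hηδ' hne
  have hνa : ν ∈ p.a := p.i_sub_a δ hδa ξ hξa hδξ.ne (hi δ hδD ξ hξ hδξ.ne ▸ hν)
  have hνa' : ν ∈ p'.a := p'.i_sub_a δ hδa' ξ hξa' hδξ.ne hν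
  exact (hmin ν (Finset.mem_inter.2 ⟨hνa, hνa'⟩) (Finset.mem_union_right _ hην)).not_gt
    (hlt δ ξ ν (p'.i_sub_f δ hδa' ξ hξa' hδξ.ne ν hν)).1

theorem union_h_eq_union_filter (hlt : ∀ α β γ, γ ∈ f α β → γ < α ∧ γ < β)
    (hh : ∀ ξ ∈ p.a ∩ p'.a, ∀ η ∈ p.a ∩ p'.a, (η ∈ p.h ξ ↔ η ∈ p'.h ξ))
    (hi : ∀ ξ ∈ p.a ∩ p'.a, ∀ η ∈ p.a ∩ p'.a, ξ ≠ η → p.i ξ η = p'.i ξ η)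
    {ξ : Ordinal} (hξ : ξ ∈ p.a ∩ p'.a) :
    p.h ξ ∪ p'.h ξ = p.h ξ ∪
      (p'.a \ p.a).filter (fun η => ∃ d, DeltaIs p p' η d ∧ d ∈ p.h ξ) := by
  ext η
  simp only [Finset.mem_union, Finset.mem_filter, Finset.mem_sdiff]
  constructor
  · rintro (h | h)
    · exact Or.inl h
    have hηa' : η ∈ p'.a := p'.h_sub ξ (Finset.mem_inter.1 hξ).2 h
    by_cases hηa : η ∈ p.a
    · exact Or.inl ((hh ξ hξ η (Finset.mem_inter.2 ⟨hηa, hηa'⟩)).2 h)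
    obtain ⟨δ, hδ⟩ := exists_deltaIs hξ (Finset.mem_union_right (p.h ξ) h)
    exact Or.inr ⟨⟨hηa', hηa⟩, δ, hδ,
      (hh ξ hξ δ hδ.1).2 ((hδ.mem_h_iff hlt hi hξ hηa).1 h)⟩
  · rintro (h | ⟨⟨-, hηa⟩, δ, hδ, hδξ⟩)
    · exact Or.inl h
    · exact Or.inr ((hδ.mem_h_iff hlt hi hξ hηa).2 ((hh ξ hξ δ hδ.1).1 hδξ))

end Twins

theorem stmt13
    (f : Ordinal → Ordinal → Set Ordinal)
    (hsymm : ∀ α β, f α β = f β α)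
    (hlt : ∀ α β γ, γ ∈ f α β → γ < α ∧ γ < β)
    (hcount : ∀ α β, (f α β).Countable)
    (p p' : PfCond f) (htw : GoodTwins p p')
    (ξ : Ordinal) (hξ : ξ ∈ p.a ∩ p'.a) :
    p.h ξ ∪ p'.h ξ = p.h ξ ∪
        (p'.a \ p.a).filter (fun η => ∃ d, DeltaIs p p' η d ∧ d ∈ p.h ξ) ∧
      p.h ξ ∪ p'.h ξ = p'.h ξ ∪
        (p.a \ p'.a).filter (fun η => ∃ d, DeltaIs p p' η d ∧ d ∈ p'.h ξ) := by
  have hh : ∀ ξ ∈ p.a ∩ p'.a, ∀ η ∈ p.a ∩ p'.a, (η ∈ p.h ξ ↔ η ∈ p'.h ξ) :=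
    fun _ h₁ _ h₂ => htw.mem_h_iff h₁ h₂
  refine ⟨union_h_eq_union_filter hlt hh htw.2.1 hξ, ?_⟩
  rw [Finset.union_comm]
  simp only [deltaIs_comm (p := p)]
  rw [Finset.inter_comm] at hξ
  refine union_h_eq_union_filter hlt ?_ ?_ hξ
  · rw [Finset.inter_comm]
    exact fun ξ h₁ η h₂ => (hh ξ h₁ η h₂).symm
  · rw [Finset.inter_comm]
    exact fun ξ h₁ η h₂ hne => (htw.2.1 ξ h₁ η h₂ hne).symm
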